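/- Assume M = Q and X̄₀^red ∈ ℝ^{Q×Q} is invertible. Let W₂* := Y·(X̄₀^red)ᵀ·(X₀𝒩⁻¹X₀ᵀ)⁻¹ and W̃₂ := Y·(X̄₀^red)⁻¹. Then W₂* − W̃₂ = −Y·Δ₂^rel·(1 + Δ₂^rel)⁻¹·(X̄₀^red)⁻¹, and consequently ‖W₂* − W̃₂‖_op ≤ ‖Y‖_op · ‖Δ₂^rel‖_op · ‖(X̄₀^red)⁻¹‖_op. -/

import Mathlib

/-!
Write `A` for the matrix of class means and `D` for `Δ₂^rel`. Deviations from the class means sum to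
zero within each class, so the cross terms in `X₀ 𝒩⁻¹ X₀ᵀ` vanish (`gram_eq`) and
`X₀ 𝒩⁻¹ X₀ᵀ = A Aᵀ + ΔX₀ 𝒩⁻¹ ΔX₀ᵀ = A (1 + D) Aᵀ`.
Inverting gives `W₂* = Y (1 + D)⁻¹ A⁻¹`, and the identity follows from
`(1 + D)⁻¹ - 1 = -D (1 + D)⁻¹`. The norm bound is submultiplicativity together with
`‖(1 + D)⁻¹‖ ≤ 1` (`opNorm_inv_one_add_le`), valid because `D` is positive semidefinite.
-/

open Matrix

noncomputable section

/-- Index type for training inputs: class `j ∈ {1,…,Q}` and sample `i ∈ {1,…,N_j}`. -/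
abbrev Idx (Q : ℕ) (Nc : Fin Q → ℕ) : Type := (j : Fin Q) × Fin (Nc j)

/-- The matrix `X̄₀^red ∈ ℝ^{M×Q}` of class means `x̄_{0,j} = (1/N_j)·Σ_i x_{0,j,i}`. -/
def classMeans {Q M : ℕ} (Nc : Fin Q → ℕ) (X : Matrix (Fin M) (Idx Q Nc) ℝ) :
    Matrix (Fin M) (Fin Q) ℝ :=
  Matrix.of fun m j => (Nc j : ℝ)⁻¹ * ∑ i : Fin (Nc j), X m ⟨j, i⟩

/-- The matrix `X̄₀ ∈ ℝ^{M×N}` with column `x̄_{0,j}` at each position of class `j`. -/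
def barX {Q M : ℕ} (Nc : Fin Q → ℕ) (X : Matrix (Fin M) (Idx Q Nc) ℝ) :
    Matrix (Fin M) (Idx Q Nc) ℝ :=
  Matrix.of fun m p => classMeans Nc X m p.1

/-- The deviation matrix `ΔX₀ := X₀ − X̄₀`. -/
def deltaX {Q M : ℕ} (Nc : Fin Q → ℕ) (X : Matrix (Fin M) (Idx Q Nc) ℝ) :
    Matrix (Fin M) (Idx Q Nc) ℝ := X - barX Nc X

/-- The block-diagonal weight matrix `𝒩 = diag(N_j·1_{N_j×N_j})`. -/
def calN (Q : ℕ) (Nc : Fin Q → ℕ) : Matrix (Idx Q Nc) (Idx Q Nc) ℝ :=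
  Matrix.diagonal fun p => (Nc p.1 : ℝ)

/-- The extended target matrix `Y^ext ∈ ℝ^{Q×N}`: column `y_j` at each position of class `j`. -/
def Yext {Q : ℕ} (Nc : Fin Q → ℕ) (Y : Matrix (Fin Q) (Fin Q) ℝ) :
    Matrix (Fin Q) (Idx Q Nc) ℝ :=
  Matrix.of fun q p => Y q p.1

/-- Entrywise ReLU on matrices: `σ(A)_{kl} = max(0, A_{kl})`. -/
def relu {m n : Type*} (A : Matrix m n ℝ) : Matrix m n ℝ :=
  Matrix.of fun i j => max 0 (A i j)

/-- Euclidean norm of a vector in `ℝ^k`. -/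
def enorm {k : ℕ} (v : Fin k → ℝ) : ℝ := Real.sqrt (∑ i, (v i) ^ 2)

/-- Frobenius (Hilbert–Schmidt) norm `‖B‖_F = √Tr(BBᵀ)`. -/
def frob {m n : Type*} [Fintype m] [Fintype n] (A : Matrix m n ℝ) : ℝ :=
  Real.sqrt (Matrix.trace (A * Aᵀ))

/-- The replicated-bias matrix `b·u_Nᵀ ∈ ℝ^{M×N}`. -/
def colRep {Q M : ℕ} (Nc : Fin Q → ℕ) (b : Fin M → ℝ) : Matrix (Fin M) (Idx Q Nc) ℝ :=
  Matrix.of fun m _ => b m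

/-- The weighted `L²_𝒩` norm `‖A‖ = √Tr(A𝒩⁻¹Aᵀ)`. -/
def l2N {Q M : ℕ} (Nc : Fin Q → ℕ) (A : Matrix (Fin M) (Idx Q Nc) ℝ) : ℝ :=
  Real.sqrt (Matrix.trace (A * (calN Q Nc)⁻¹ * Aᵀ))

/-- `ℓ²→ℓ²` operator norm of a matrix. -/
def opNorm {m n : ℕ} (A : Matrix (Fin m) (Fin n) ℝ) : ℝ :=
  ‖LinearMap.toContinuousLinearMap (Matrix.toEuclideanLin A)‖

/-- `Δ₁^rel := (X̄₀^red)⁻¹ · ΔX₀`. -/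
def Del1 {Q : ℕ} (Nc : Fin Q → ℕ) (X₀ : Matrix (Fin Q) (Idx Q Nc) ℝ) :
    Matrix (Fin Q) (Idx Q Nc) ℝ :=
  (classMeans Nc X₀)⁻¹ * deltaX Nc X₀

/-- `Δ₂^rel := Δ₁^rel · 𝒩⁻¹ · (Δ₁^rel)ᵀ`. -/
def Del2 {Q : ℕ} (Nc : Fin Q → ℕ) (X₀ : Matrix (Fin Q) (Idx Q Nc) ℝ) :
    Matrix (Fin Q) (Fin Q) ℝ :=
  Del1 Nc X₀ * (calN Q Nc)⁻¹ * (Del1 Nc X₀)ᵀ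

/-- The projector `𝒫 := 𝒩⁻¹X₀ᵀ(X₀𝒩⁻¹X₀ᵀ)⁻¹X₀`. -/
def Pmat {Q M : ℕ} (Nc : Fin Q → ℕ) (X₀ : Matrix (Fin M) (Idx Q Nc) ℝ) :
    Matrix (Idx Q Nc) (Idx Q Nc) ℝ :=
  (calN Q Nc)⁻¹ * X₀ᵀ * (X₀ * (calN Q Nc)⁻¹ * X₀ᵀ)⁻¹ * X₀

lemma calN_inv {Q : ℕ} (Nc : Fin Q → ℕ) (hNc : ∀ j, 0 < Nc j) :
    (calN Q Nc)⁻¹ = Matrix.diagonal fun p => ((Nc p.1 : ℝ))⁻¹ := by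
  apply Matrix.inv_eq_left_inv
  rw [calN, Matrix.diagonal_mul_diagonal, ← Matrix.diagonal_one]
  congr 1
  funext p
  exact inv_mul_cancel₀ (Nat.cast_ne_zero.mpr (hNc p.1).ne')

lemma sum_deltaX {Q M : ℕ} (Nc : Fin Q → ℕ) (hNc : ∀ j, 0 < Nc j)
    (X : Matrix (Fin M) (Idx Q Nc) ℝ) (m : Fin M) (j : Fin Q) :
    ∑ i : Fin (Nc j), deltaX Nc X m ⟨j, i⟩ = 0 := by
  have h : (Nc j : ℝ) ≠ 0 := Nat.cast_ne_zero.mpr (hNc j).ne'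
  have hmean : (Nc j : ℝ) * classMeans Nc X m j = ∑ i : Fin (Nc j), X m ⟨j, i⟩ :=
    mul_inv_cancel_left₀ h _
  have hsub (i : Fin (Nc j)) :
      deltaX Nc X m ⟨j, i⟩ = X m ⟨j, i⟩ - classMeans Nc X m j := rfl
  simp only [hsub]
  rw [Finset.sum_sub_distrib, Finset.sum_const, Finset.card_univ, Fintype.card_fin, nsmul_eq_mul,
    hmean, sub_self]

lemma deltaX_mul_barX {Q M : ℕ} (Nc : Fin Q → ℕ) (hNc : ∀ j, 0 < Nc j)
    (X : Matrix (Fin M) (Idx Q Nc) ℝ) :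
    deltaX Nc X * (calN Q Nc)⁻¹ * (barX Nc X)ᵀ = 0 := by
  ext m m'
  rw [calN_inv Nc hNc, Matrix.mul_apply, Fintype.sum_sigma]
  simp only [Matrix.mul_diagonal, Matrix.transpose_apply, Matrix.zero_apply]
  refine Finset.sum_eq_zero fun j _ => ?_
  simp only [barX, Matrix.of_apply]
  rw [← Finset.sum_mul, ← Finset.sum_mul, sum_deltaX Nc hNc, zero_mul, zero_mul]

lemma barX_mul_barX {Q M : ℕ} (Nc : Fin Q → ℕ) (hNc : ∀ j, 0 < Nc j)
    (X : Matrix (Fin M) (Idx Q Nc) ℝ) :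
    barX Nc X * (calN Q Nc)⁻¹ * (barX Nc X)ᵀ = classMeans Nc X * (classMeans Nc X)ᵀ := by
  ext m m'
  rw [calN_inv Nc hNc, Matrix.mul_apply, Fintype.sum_sigma, Matrix.mul_apply]
  refine Finset.sum_congr rfl fun j _ => ?_
  have h : (Nc j : ℝ) ≠ 0 := Nat.cast_ne_zero.mpr (hNc j).ne'
  simp only [Matrix.mul_diagonal, Matrix.transpose_apply, barX, Matrix.of_apply,
    Finset.sum_const, Finset.card_univ, Fintype.card_fin, nsmul_eq_mul]
  field_simp

/-- The weighted Gram matrix splits into a between-class and a within-class part. -/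
lemma gram_eq {Q M : ℕ} (Nc : Fin Q → ℕ) (hNc : ∀ j, 0 < Nc j)
    (X : Matrix (Fin M) (Idx Q Nc) ℝ) :
    X * (calN Q Nc)⁻¹ * Xᵀ = classMeans Nc X * (classMeans Nc X)ᵀ +
      deltaX Nc X * (calN Q Nc)⁻¹ * (deltaX Nc X)ᵀ := by
  have hX : X = barX Nc X + deltaX Nc X := by simp [deltaX]
  have h₁ := deltaX_mul_barX Nc hNc X
  have h₂ : barX Nc X * (calN Q Nc)⁻¹ * (deltaX Nc X)ᵀ = 0 := by
    have h := congrArg Matrix.transpose h₁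
    rw [calN_inv Nc hNc] at h ⊢
    simpa [Matrix.transpose_mul, Matrix.mul_assoc] using h
  calc X * (calN Q Nc)⁻¹ * Xᵀ
      = (barX Nc X + deltaX Nc X) * (calN Q Nc)⁻¹ * (barX Nc X + deltaX Nc X)ᵀ := by rw [← hX]
    _ = _ := by
      rw [Matrix.transpose_add, Matrix.add_mul, Matrix.add_mul, Matrix.mul_add, Matrix.mul_add,
        h₁, h₂, barX_mul_barX Nc hNc, add_zero, zero_add]

lemma gram_eq_conj {Q : ℕ} (Nc : Fin Q → ℕ) (hNc : ∀ j, 0 < Nc j)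
    (X₀ : Matrix (Fin Q) (Idx Q Nc) ℝ) (hred : IsUnit (classMeans Nc X₀)) :
    X₀ * (calN Q Nc)⁻¹ * X₀ᵀ =
      classMeans Nc X₀ * (1 + Del2 Nc X₀) * (classMeans Nc X₀)ᵀ := by
  have hdet := (Matrix.isUnit_iff_isUnit_det _).mp hred
  have hΔ : classMeans Nc X₀ * Del1 Nc X₀ = deltaX Nc X₀ := by
    rw [Del1, Matrix.mul_nonsing_inv_cancel_left _ _ hdet]
  rw [gram_eq Nc hNc, ← hΔ, Del2]
  simp only [Matrix.transpose_mul, Matrix.mul_add, Matrix.add_mul, Matrix.mul_one,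
    Matrix.mul_assoc]

lemma posSemidef_Del2 {Q : ℕ} (Nc : Fin Q → ℕ) (hNc : ∀ j, 0 < Nc j)
    (X₀ : Matrix (Fin Q) (Idx Q Nc) ℝ) : (Del2 Nc X₀).PosSemidef := by
  have h : (Matrix.diagonal fun p : Idx Q Nc => ((Nc p.1 : ℝ))⁻¹).PosSemidef :=
    Matrix.PosSemidef.diagonal fun p => inv_nonneg.mpr (Nat.cast_nonneg _)
  rw [Del2, calN_inv Nc hNc, ← Matrix.conjTranspose_eq_transpose_of_trivial]
  exact h.mul_mul_conjTranspose_same _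

lemma opNorm_mul_le {l m n : ℕ} (A : Matrix (Fin l) (Fin m) ℝ) (B : Matrix (Fin m) (Fin n) ℝ) :
    opNorm (A * B) ≤ opNorm A * opNorm B :=
  Matrix.l2_opNorm_mul A B

lemma opNorm_nonneg {m n : ℕ} (A : Matrix (Fin m) (Fin n) ℝ) : 0 ≤ opNorm A := norm_nonneg _

lemma opNorm_neg {m n : ℕ} (A : Matrix (Fin m) (Fin n) ℝ) : opNorm (-A) = opNorm A := by
  simp [opNorm]

/-- With `w = (1 + D)⁻¹ v`, positivity of `D` gives `‖w‖² ≤ ⟪w, (1 + D) w⟫ = ⟪w, v⟫ ≤ ‖w‖ ‖v‖`. -/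
lemma opNorm_inv_one_add_le {n : ℕ} {D : Matrix (Fin n) (Fin n) ℝ} (hD : D.PosSemidef)
    (hu : IsUnit (1 + D).det) : opNorm (1 + D)⁻¹ ≤ 1 := by
  refine ContinuousLinearMap.opNorm_le_bound _ zero_le_one fun v => ?_
  rw [one_mul, LinearMap.coe_toContinuousLinearMap']
  set w := Matrix.toEuclideanLin (1 + D)⁻¹ v with hw
  have hw' : w.ofLp = (1 + D)⁻¹ *ᵥ v.ofLp := by rw [hw]; rfl
  have hv : v.ofLp = w.ofLp + D *ᵥ w.ofLp := by
    rw [← Matrix.one_mulVec w.ofLp, Matrix.mulVec_mulVec, Matrix.mul_one, ← Matrix.add_mulVec, hw',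
      Matrix.mulVec_mulVec, Matrix.mul_nonsing_inv _ hu, Matrix.one_mulVec]
  have hpos : 0 ≤ w.ofLp ⬝ᵥ (D *ᵥ w.ofLp) := by
    simpa using hD.dotProduct_mulVec_nonneg w.ofLp
  have hin : inner ℝ w v = inner ℝ w w + w.ofLp ⬝ᵥ (D *ᵥ w.ofLp) := by
    simp only [EuclideanSpace.inner_eq_star_dotProduct, star_trivial]
    rw [hv, add_dotProduct, dotProduct_comm (D *ᵥ w.ofLp)]
  have hcs := real_inner_le_norm w v
  rw [real_inner_self_eq_norm_sq] at hin
  by_contra! hlt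
  nlinarith [norm_nonneg v, norm_nonneg w]

/-- For `M = Q` with `X̄₀^red` invertible, `W₂* := Y(X̄₀^red)ᵀ(X₀𝒩⁻¹X₀ᵀ)⁻¹`
and `W̃₂ := Y(X̄₀^red)⁻¹` satisfy
`W₂* − W̃₂ = −Y·Δ₂^rel·(1 + Δ₂^rel)⁻¹·(X̄₀^red)⁻¹`, and consequently
`‖W₂* − W̃₂‖_op ≤ ‖Y‖_op·‖Δ₂^rel‖_op·‖(X̄₀^red)⁻¹‖_op`. -/
theorem statement16 {Q : ℕ} (Nc : Fin Q → ℕ) (hNc : ∀ j, 0 < Nc j)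
    (X₀ : Matrix (Fin Q) (Idx Q Nc) ℝ)
    (hred : IsUnit (classMeans Nc X₀))
    (Y : Matrix (Fin Q) (Fin Q) ℝ) :
    Y * (classMeans Nc X₀)ᵀ * (X₀ * (calN Q Nc)⁻¹ * X₀ᵀ)⁻¹ - Y * (classMeans Nc X₀)⁻¹ =
      -(Y * Del2 Nc X₀ * (1 + Del2 Nc X₀)⁻¹ * (classMeans Nc X₀)⁻¹) ∧
    opNorm (Y * (classMeans Nc X₀)ᵀ * (X₀ * (calN Q Nc)⁻¹ * X₀ᵀ)⁻¹ -
        Y * (classMeans Nc X₀)⁻¹) ≤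
      opNorm Y * opNorm (Del2 Nc X₀) * opNorm ((classMeans Nc X₀)⁻¹) := by
  have hdet := (Matrix.isUnit_iff_isUnit_det _).mp hred
  have hpsd := posSemidef_Del2 Nc hNc X₀
  have hu : IsUnit (1 + Del2 Nc X₀).det :=
    (Matrix.isUnit_iff_isUnit_det _).mp (Matrix.PosDef.one.add_posSemidef hpsd).isUnit
  have heq : Y * (classMeans Nc X₀)ᵀ * (X₀ * (calN Q Nc)⁻¹ * X₀ᵀ)⁻¹ - Y * (classMeans Nc X₀)⁻¹ =
      -(Y * Del2 Nc X₀ * (1 + Del2 Nc X₀)⁻¹ * (classMeans Nc X₀)⁻¹) := by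
    have hres : Del2 Nc X₀ * (1 + Del2 Nc X₀)⁻¹ = 1 - (1 + Del2 Nc X₀)⁻¹ := by
      rw [eq_sub_iff_add_eq, add_comm]
      nth_rewrite 1 [← Matrix.one_mul (1 + Del2 Nc X₀)⁻¹]
      rw [← Matrix.add_mul, Matrix.mul_nonsing_inv _ hu]
    have hdetT : IsUnit (classMeans Nc X₀)ᵀ.det := by rwa [Matrix.det_transpose]
    rw [gram_eq_conj Nc hNc X₀ hred, Matrix.mul_inv_rev, Matrix.mul_inv_rev, Matrix.mul_assoc Y,
      Matrix.mul_nonsing_inv_cancel_left _ _ hdetT, Matrix.mul_assoc Y (Del2 Nc X₀), hres,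
      Matrix.mul_sub, Matrix.sub_mul, Matrix.mul_one, neg_sub, Matrix.mul_assoc]
  refine ⟨heq, ?_⟩
  rw [heq, opNorm_neg]
  have hY := opNorm_nonneg Y
  have hD := opNorm_nonneg (Del2 Nc X₀)
  have hA := opNorm_nonneg (classMeans Nc X₀)⁻¹
  calc opNorm (Y * Del2 Nc X₀ * (1 + Del2 Nc X₀)⁻¹ * (classMeans Nc X₀)⁻¹)
      ≤ opNorm (Y * Del2 Nc X₀ * (1 + Del2 Nc X₀)⁻¹) * opNorm (classMeans Nc X₀)⁻¹ :=
        opNorm_mul_le _ _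
    _ ≤ (opNorm (Y * Del2 Nc X₀) * opNorm (1 + Del2 Nc X₀)⁻¹) * opNorm (classMeans Nc X₀)⁻¹ := by
        gcongr
        exact opNorm_mul_le _ _
    _ ≤ (opNorm (Y * Del2 Nc X₀) * 1) * opNorm (classMeans Nc X₀)⁻¹ := by
        gcongr
        · exact opNorm_nonneg _
        · exact opNorm_inv_one_add_le hpsd hu
    _ ≤ opNorm Y * opNorm (Del2 Nc X₀) * opNorm (classMeans Nc X₀)⁻¹ := by
        rw [mul_one]
        gcongr
        exact opNorm_mul_le _ _
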